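/- arXiv:1303.7015 — 3 statements merged into one kernel-verified Lean document; each statement's English description precedes it below -/
import Mathlib

section
/- For every natural number n ≥ 3, the total number of pairings satisfies P(n+1) = P(n−1) + P1(n). -/
/-- A pairing of a sequence of `n` jobs: a list of block sizes, each 1 or 2,
summing to `n`, with no two adjacent entries both equal to 1. -/
def IsPairing (n : ℕ) (l : List ℕ) : Prop :=
  (∀ x ∈ l, x = 1 ∨ x = 2) ∧ l.sum = n ∧ l.Chain' (fun a b => ¬(a = 1 ∧ b = 1))

/-- `P n`: the total number of pairings of `n`. -/
noncomputable def P (n : ℕ) : ℕ := Nat.card {l : List ℕ // IsPairing n l}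

/-- `P1 n`: the number of pairings of `n` whose first entry is 2. -/
noncomputable def P1 (n : ℕ) : ℕ := Nat.card {l : List ℕ // IsPairing n l ∧ l.head? = some 2}

/-- `P2 n`: the number of pairings of `n` whose first entry is 1. -/
noncomputable def P2 (n : ℕ) : ℕ := Nat.card {l : List ℕ // IsPairing n l ∧ l.head? = some 1}

/-!
Delete the first entry of a pairing of `n + 1`. After a `2` any pairing of `n - 1` may follow; after
a `1` a pairing of `n` may follow exactly when it does not itself begin with `1`, which for `n ≠ 0`
means that it begins with `2`.
-/

theorem isPairing_cons {n a : ℕ} {l : List ℕ} :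
    IsPairing (n + a) (a :: l) ↔
      (a = 1 ∨ a = 2) ∧ (a = 1 → l.head? ≠ some 1) ∧ IsPairing n l := by
  have hsum : (a :: l).sum = n + a ↔ l.sum = n := by
    rw [List.sum_cons, Nat.add_comm, Nat.add_right_cancel_iff]
  have hhead : (∀ b ∈ l.head?, ¬(a = 1 ∧ b = 1)) ↔ (a = 1 → l.head? ≠ some 1) := by
    aesop
  rw [IsPairing, List.forall_mem_cons, hsum, List.Chain', List.isChain_cons, hhead, IsPairing,
    List.Chain']
  tauto

theorem isPairing_two_cons {n : ℕ} {l : List ℕ} : IsPairing (n + 2) (2 :: l) ↔ IsPairing n l := by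
  simp [isPairing_cons]

theorem isPairing_one_cons {n : ℕ} {l : List ℕ} :
    IsPairing (n + 1) (1 :: l) ↔ IsPairing n l ∧ l.head? ≠ some 1 := by
  simp [isPairing_cons, and_comm]

theorem IsPairing.head?_eq_two_or_one {n : ℕ} {l : List ℕ} (hl : IsPairing n l) (hn : n ≠ 0) :
    l.head? = some 2 ∨ l.head? = some 1 := by
  obtain ⟨hmem, hsum, -⟩ := hl
  cases l with
  | nil => exact absurd hsum.symm hn
  | cons a t => simpa [or_comm] using hmem a List.mem_cons_self

theorem IsPairing.head?_ne_some_one_iff {n : ℕ} {l : List ℕ} (hl : IsPairing n l) (hn : n ≠ 0) :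
    l.head? ≠ some 1 ↔ l.head? = some 2 := by
  rcases hl.head?_eq_two_or_one hn with h | h <;> simp [h]

theorem finite_setOf_isPairing (n : ℕ) : {l | IsPairing n l}.Finite := by
  refine (Set.finite_range (Composition.blocks (n := n))).subset ?_
  rintro l ⟨hmem, hsum, -⟩
  have hpos {i : ℕ} (hi : i ∈ l) : 0 < i := by grind
  exact ⟨⟨l, hpos, hsum⟩, rfl⟩

theorem natCard_and_head?_eq_some {α : Type*} (p : List α → Prop) (a : α) :
    Nat.card {l // p l ∧ l.head? = some a} = Nat.card {l // p (a :: l)} := by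
  have himage : {l | p l ∧ l.head? = some a} = List.cons a '' {l | p (a :: l)} := by
    ext l
    refine ⟨fun ⟨hl, ha⟩ => ?_, ?_⟩
    · obtain ⟨t, rfl⟩ := List.head?_eq_some_iff.1 ha
      exact ⟨t, hl, rfl⟩
    · rintro ⟨t, ht, rfl⟩
      exact ⟨ht, rfl⟩
  exact (congrArg Set.ncard himage).trans (Set.ncard_image_of_injective _ List.cons_injective)

theorem P_eq_P1_add_P2 {n : ℕ} (hn : n ≠ 0) : P n = P1 n + P2 n := by
  have hunion : {l | IsPairing n l} =
      {l | IsPairing n l ∧ l.head? = some 2} ∪ {l | IsPairing n l ∧ l.head? = some 1} := by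
    ext l
    exact ⟨fun hl => (hl.head?_eq_two_or_one hn).imp (⟨hl, ·⟩) (⟨hl, ·⟩),
      fun hl => hl.elim And.left And.left⟩
  have hdisj : Disjoint {l | IsPairing n l ∧ l.head? = some 2}
      {l | IsPairing n l ∧ l.head? = some 1} :=
    Set.disjoint_left.2 fun l h₂ h₁ => by simpa using h₂.2.symm.trans h₁.2
  exact (congrArg Set.ncard hunion).trans <| Set.ncard_union_eq hdisj
    ((finite_setOf_isPairing n).subset fun _ hl => hl.1)
    ((finite_setOf_isPairing n).subset fun _ hl => hl.1)

theorem P1_add_two (n : ℕ) : P1 (n + 2) = P n := by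
  simp only [P1, P, natCard_and_head?_eq_some, isPairing_two_cons]

theorem P2_succ {n : ℕ} (hn : n ≠ 0) : P2 (n + 1) = P1 n := by
  have hcons (l : List ℕ) : IsPairing (n + 1) (1 :: l) ↔ IsPairing n l ∧ l.head? = some 2 :=
    isPairing_one_cons.trans <| and_congr_right fun hl => hl.head?_ne_some_one_iff hn
  rw [P2, natCard_and_head?_eq_some, P1]
  simp only [hcons]

theorem P_succ_eq_P_pred_add_P1 (n : ℕ) (hn : 3 ≤ n) : P (n + 1) = P (n - 1) + P1 n := by
  have hsucc : n + 1 = n - 1 + 2 := by lia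
  calc
    P (n + 1) = P1 (n + 1) + P2 (n + 1) := P_eq_P1_add_P2 n.succ_ne_zero
    _ = P (n - 1) + P1 n := by rw [P2_succ (by lia), hsucc, P1_add_two]
end

section
/- For every natural number n ≥ 4, the total number of pairings satisfies the Padovan-type recurrence P(n+1) = P(n−1) + P(n−2). -/
/-! Removing a leading `2` turns the pairings of `n + 2` counted by `P1` into all pairings of `n`.
Removing a leading `1` from a pairing of `n + 2` leaves a nonempty pairing that cannot begin with
`1`, so `P2 (n + 2) = P1 (n + 1)`. Substituting into `P = P1 + P2` gives
`P (n + 3) = P1 (n + 3) + P2 (n + 3) = P (n + 1) + P1 (n + 2) = P (n + 1) + P n`. -/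

theorem isPairing_iff_isChain {n : ℕ} {l : List ℕ} : IsPairing n l ↔
    (∀ x ∈ l, x = 1 ∨ x = 2) ∧ l.sum = n ∧ l.IsChain (fun a b => ¬(a = 1 ∧ b = 1)) :=
  Iff.rfl

namespace IsPairing

theorem head?_eq_two_or_one_s3 {n : ℕ} {l : List ℕ} (h : IsPairing (n + 1) l) :
    l.head? = some 2 ∨ l.head? = some 1 := by
  obtain ⟨mem_eq, sum_eq, -⟩ := h
  cases l with
  | nil => simp at sum_eq
  | cons a l => simpa [or_comm] using mem_eq a List.mem_cons_self

theorem head?_ne_one_iff {n : ℕ} {l : List ℕ} (h : IsPairing (n + 1) l) :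
    l.head? ≠ some 1 ↔ l.head? = some 2 :=
  ⟨h.head?_eq_two_or_one_s3.resolve_right, fun h2 => by simp [h2]⟩

theorem pos_of_mem {n x : ℕ} {l : List ℕ} (h : IsPairing n l) (hx : x ∈ l) : 0 < x := by
  rcases h.1 x hx with rfl | rfl <;> decide

theorem finite_setOf (n : ℕ) : {l | IsPairing n l}.Finite := by
  let toComposition (l : {l // IsPairing n l}) : Composition n :=
    ⟨l.1, fun hx => l.2.pos_of_mem hx, l.2.2.1⟩
  have toComposition_injective : toComposition.Injective := fun _ _ h =>
    Subtype.ext (congrArg Composition.blocks h)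
  exact Finite.of_injective toComposition toComposition_injective

end IsPairing

theorem P2_add_two (n : ℕ) : P2 (n + 2) = P1 (n + 1) := by
  have image_cons : {l | IsPairing (n + 2) l ∧ l.head? = some 1} =
      List.cons 1 '' {l | IsPairing (n + 1) l ∧ l.head? = some 2} := by
    ext l
    constructor
    · rintro ⟨hl, head_eq⟩
      obtain ⟨t, rfl⟩ := List.head?_eq_some_iff.1 head_eq
      obtain ⟨ht, head_ne⟩ := isPairing_one_cons.1 hl
      exact ⟨t, ⟨ht, ht.head?_ne_one_iff.1 head_ne⟩, rfl⟩
    · rintro ⟨t, ⟨ht, head_eq⟩, rfl⟩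
      exact ⟨isPairing_one_cons.2 ⟨ht, ht.head?_ne_one_iff.2 head_eq⟩, rfl⟩
  exact (congrArg Set.ncard image_cons).trans (Set.ncard_image_of_injective _ List.cons_injective)

theorem P_succ_eq_P1_add_P2 (n : ℕ) : P (n + 1) = P1 (n + 1) + P2 (n + 1) := by
  have head_eq_union : {l | IsPairing (n + 1) l} =
      {l | IsPairing (n + 1) l ∧ l.head? = some 2} ∪
        {l | IsPairing (n + 1) l ∧ l.head? = some 1} := by
    ext l
    exact ⟨fun hl => hl.head?_eq_two_or_one_s3.imp (⟨hl, ·⟩) (⟨hl, ·⟩),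
      fun h => h.elim And.left And.left⟩
  have head_disjoint : Disjoint {l | IsPairing (n + 1) l ∧ l.head? = some 2}
      {l | IsPairing (n + 1) l ∧ l.head? = some 1} :=
    Set.disjoint_left.2 fun l h2 h1 => h1.1.head?_ne_one_iff.2 h2.2 h1.2
  have finite_pairings := IsPairing.finite_setOf (n + 1)
  exact (congrArg Set.ncard head_eq_union).trans <| Set.ncard_union_eq head_disjoint
    (finite_pairings.subset fun _ => And.left) (finite_pairings.subset fun _ => And.left)

theorem P_padovan_general (n : ℕ) : P (n + 3) = P (n + 1) + P n := by
  rw [P_succ_eq_P1_add_P2, P1_add_two, P2_add_two, P1_add_two]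

theorem P_padovan (n : ℕ) (hn : 4 ≤ n) : P (n + 1) = P (n - 1) + P (n - 2) := by
  obtain ⟨m, rfl⟩ := Nat.exists_eq_add_of_le' (show 2 ≤ n by omega)
  exact P_padovan_general m
end

section
/- For every natural number n ≥ 4, the number of pairings of a sequence of n+1 jobs whose first part is a singleton equals the total number of pairings of a sequence of n−2 jobs; that is, P2(n+1) = P(n−2). -/
/-!
Since two adjacent entries are never both `1`, a leading `1` that is not the whole list must be
followed by `2`, so removing it gives `P2 (n + 2) = P1 (n + 1)`. A leading `2` imposes nothing on
what follows, so removing it gives `P1 (n + 2) = P n`.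
-/

namespace IsPairing

variable {n : ℕ} {l : List ℕ}

theorem iff_isChain :
    IsPairing n l ↔ (∀ x ∈ l, x = 1 ∨ x = 2) ∧ l.sum = n ∧
      l.IsChain (fun a b => ¬(a = 1 ∧ b = 1)) :=
  Iff.rfl

theorem two_cons_iff : IsPairing (n + 2) (2 :: l) ↔ IsPairing n l := by
  simp [iff_isChain, List.isChain_cons, Nat.add_comm]

theorem one_cons_iff : IsPairing (n + 1) (1 :: l) ↔ IsPairing n l ∧ l.head? ≠ some 1 := by
  have hhead : (∀ b ∈ l.head?, ¬(1 = 1 ∧ b = 1)) ↔ l.head? ≠ some 1 := by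
    cases l <;> simp
  have hsum : (1 :: l).sum = n + 1 ↔ l.sum = n := by
    rw [List.sum_cons, Nat.add_comm, Nat.add_right_cancel_iff]
  rw [iff_isChain, iff_isChain, List.forall_mem_cons, hsum, List.isChain_cons, hhead]
  tauto

theorem head?_ne_some_one_iff_s4 (h : IsPairing (n + 1) l) : l.head? ≠ some 1 ↔ l.head? = some 2 := by
  obtain ⟨hmem, hsum, -⟩ := h
  cases l with
  | nil => simp at hsum
  | cons a t =>
    rcases hmem a List.mem_cons_self with rfl | rfl <;> simp

theorem one_cons_iff_head?_eq_some_two :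
    IsPairing (n + 2) (1 :: l) ↔ IsPairing (n + 1) l ∧ l.head? = some 2 :=
  one_cons_iff.trans (and_congr_right head?_ne_some_one_iff_s4)

end IsPairing

theorem natCard_head?_eq_some {α : Type*} (p : List α → Prop) (a : α) :
    Nat.card {l // p l ∧ l.head? = some a} = Nat.card {t // p (a :: t)} :=
  Nat.card_congr
    { toFun := fun l => ⟨l.1.tail, by rw [List.cons_head?_tail l.2.2]; exact l.2.1⟩
      invFun := fun t => ⟨a :: t.1, t.2, rfl⟩
      left_inv := fun l => Subtype.ext (List.cons_head?_tail l.2.2)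
      right_inv := fun _ => rfl }

theorem P2_succ_eq_P_sub_two_general (n : ℕ) : P2 (n + 3) = P n :=
  (P2_add_two (n + 1)).trans (P1_add_two n)

theorem P2_succ_eq_P_sub_two (n : ℕ) (hn : 4 ≤ n) : P2 (n + 1) = P (n - 2) := by
  obtain ⟨m, rfl⟩ : ∃ m, n = m + 2 := ⟨n - 2, by lia⟩
  exact P2_succ_eq_P_sub_two_general m
end
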